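/- For every integer r ≥ 2, χ_ρ(H(r)) = 5 if r is even and χ_ρ(H(r)) = 7 if r is odd. -/

import Mathlib

/-- The `H`-graph `H(r)`: a 3-regular graph on vertices `(row, column)` with rows
`0 = u`, `1 = v`, `2 = w` and columns indexed by `ZMod (2r)`.  Edges: `u_i u_{i+1}`,
`w_i w_{i+1}`, `u_i v_i`, `v_i w_i` (indices mod `2r`), and `v_{2i} v_{2i+1}`. -/
def HGraph (r : ℕ) : SimpleGraph (Fin 3 × ZMod (2 * r)) :=
  SimpleGraph.fromRel fun x y =>
    ((x.1 = 0 ∧ y.1 = 0 ∨ x.1 = 2 ∧ y.1 = 2) ∧ y.2 = x.2 + 1) ∨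
    ((x.1 = 0 ∧ y.1 = 1 ∨ x.1 = 1 ∧ y.1 = 2) ∧ x.2 = y.2) ∨
    (x.1 = 1 ∧ y.1 = 1 ∧ ∃ i : ZMod (2 * r), x.2 = 2 * i ∧ y.2 = 2 * i + 1)

/-- A coloring `c : V → {1,…,k}` is an `S`-packing `k`-coloring for the sequence `s`
if vertices of the same color `i` are at distance greater than `s i`. -/
def IsPackingColoring {V : Type*} (G : SimpleGraph V) (k : ℕ) (s : ℕ → ℕ)
    (c : V → ℕ) : Prop :=
  (∀ v, 1 ≤ c v ∧ c v ≤ k) ∧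
  ∀ u v, u ≠ v → c u = c v → s (c u) < G.dist u v

/-- The `S`-packing chromatic number for the sequence `s`: the least `k` such that
`G` admits an `S`-packing `k`-coloring. -/
noncomputable def packingChromaticNumber {V : Type*} (G : SimpleGraph V)
    (s : ℕ → ℕ) : ℕ :=
  sInf {k | ∃ c : V → ℕ, IsPackingColoring G k s c}

/-- Distance of two vertices of the infinite strip in rows `a`, `b`, whose columns differ by `k`;
`same` records whether the two columns form one of the pairs `2m, 2m+1`. -/
def hh (a b k : ℕ) (same : Bool) : ℕ :=
  if a = b then
    (if a = 1 then (if k = 0 then 0 else bif same then 1 else k + 2) else k)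
  else if a = 1 ∨ b = 1 then k + 1 else k + 2

/-- Distance bound in a window; vertex `t` is in row `t % 3` and column `t / 3`. -/
def dWin (s t : ℕ) : ℕ :=
  hh (s % 3) (t % 3) ((s / 3 - t / 3) + (t / 3 - s / 3)) (Nat.beq (s / 3 / 2) (t / 3 / 2))

/-- Distance bound in `H(3)`. -/
def dCyc (s t : ℕ) : ℕ :=
  hh (s % 3) (t % 3) (min ((s / 3 - t / 3) + (t / 3 - s / 3)) (6 - ((s / 3 - t / 3) + (t / 3 - s / 3))))
    (Nat.beq (s / 3 / 2) (t / 3 / 2))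

/-- Bits `(s, c)` that conflict with color `c` at `t`. -/
def maskOf (D : ℕ → ℕ → ℕ) (n t c : ℕ) : ℕ :=
  (List.range n).foldr
    (fun s acc => if s ≠ t ∧ D s t ≤ c then Nat.lor acc (2 ^ (8 * s + c)) else acc) 0

/-- The possible moves at vertex `t`: pairs (bit to set, conflict mask). -/
def stepOf (D : ℕ → ℕ → ℕ) (n K t : ℕ) : List (ℕ × ℕ) :=
  (List.range K).map fun c => (2 ^ (8 * t + (c + 1)), maskOf D n t (c + 1))

/-- Try all moves of one vertex (written with recursors, for fast kernel evaluation). -/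
noncomputable def moves (M : ℕ) (k : ℕ → Bool) (st : List (ℕ × ℕ)) : Bool :=
  @List.rec (ℕ × ℕ) (fun _ => Bool) true
    (fun p _ ih => @Bool.rec (fun _ => Bool) ih (@Bool.rec (fun _ => Bool) false ih (k (Nat.lor M p.1)))
      (Nat.beq (Nat.land M p.2) 0)) st

/-- Backtracking search: `true` if every complete state satisfies `leaf`. -/
noncomputable def search (L : List (List (ℕ × ℕ))) (leaf : ℕ → Bool) : ℕ → Bool :=
  @List.rec (List (ℕ × ℕ)) (fun _ => ℕ → Bool) leaf (fun st _ ih M => moves M ih st) L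

/-- the type of pair `p`, read off the state. -/
def fBit (p M : ℕ) : Bool :=
  (M.testBit (8 * (6 * p) + 3) || M.testBit (8 * (6 * p + 3) + 3)) ||
    (!(M.testBit (8 * (6 * p + 2) + 3) || M.testBit (8 * (6 * p + 5) + 3)) &&
     !(M.testBit (8 * (6 * p) + 2) || M.testBit (8 * (6 * p + 3) + 2)))

/-- Order of the vertices of the two middle pairs, after vertex 21. -/
def ordA : List ℕ := [22, 23, 18, 19, 20, 24, 25, 26, 27, 28, 29]

/-- Order of the remaining vertices of the window. -/
def ordB : List ℕ := [30, 31, 32, 33, 34, 35, 15, 16, 17, 12, 13, 14, 36, 37, 38, 39, 40, 41,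
  9, 10, 11, 6, 7, 8, 42, 43, 44, 45, 46, 47, 3, 4, 5, 0, 1, 2]

theorem search4 : search ((List.range 12).map (stepOf dWin 12 4)) (fun _ => false) 0 = true := by
  decide +kernel

/-- Order of the vertices of `H(3)` after vertex 0. -/
def ordC : List ℕ := [1, 2, 3, 4, 5, 6, 7, 8, 9, 10, 11, 12, 13, 14, 15, 16, 17]

theorem search_cons (st : List (ℕ × ℕ)) (L : List (List (ℕ × ℕ))) (leaf : ℕ → Bool) (M : ℕ) :
    search (st :: L) leaf M = moves M (search L leaf) st := rfl

theorem moves_of {M : ℕ} {k : ℕ → Bool} : ∀ {st : List (ℕ × ℕ)},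
    (∀ p ∈ st, k (Nat.lor M p.1) = true) → moves M k st = true
  | [], _ => rfl
  | q :: st, h => by
    change @Bool.rec (fun _ => Bool) (moves M k st)
        (@Bool.rec (fun _ => Bool) false (moves M k st) (k (Nat.lor M q.1)))
        (Nat.beq (Nat.land M q.2) 0) = true
    rw [moves_of (fun p hp => h p (List.mem_cons_of_mem _ hp)), h q List.mem_cons_self]
    cases Nat.beq (Nat.land M q.2) 0 <;> rfl

theorem search3_1 : search (ordC.map (stepOf dCyc 18 6)) (fun _ => false)
    (Nat.lor 0 (2 ^ (8 * 0 + 1))) = true := by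
  decide +kernel

theorem search3_2 : search (ordC.map (stepOf dCyc 18 6)) (fun _ => false)
    (Nat.lor 0 (2 ^ (8 * 0 + 2))) = true := by
  decide +kernel

theorem search3_3 : search (ordC.map (stepOf dCyc 18 6)) (fun _ => false)
    (Nat.lor 0 (2 ^ (8 * 0 + 3))) = true := by
  decide +kernel

theorem search3_4 : search (ordC.map (stepOf dCyc 18 6)) (fun _ => false)
    (Nat.lor 0 (2 ^ (8 * 0 + 4))) = true := by
  decide +kernel

theorem search3_5 : search (ordC.map (stepOf dCyc 18 6)) (fun _ => false)
    (Nat.lor 0 (2 ^ (8 * 0 + 5))) = true := by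
  decide +kernel

theorem search3_6 : search (ordC.map (stepOf dCyc 18 6)) (fun _ => false)
    (Nat.lor 0 (2 ^ (8 * 0 + 6))) = true := by
  decide +kernel

theorem search3 : search ((0 :: ordC).map (stepOf dCyc 18 6)) (fun _ => false) 0 = true := by
  rw [List.map_cons, search_cons]
  apply moves_of
  intro p hp
  obtain ⟨c, hc, rfl⟩ := List.mem_map.1 hp
  have hc6 := List.mem_range.1 hc
  interval_cases c
  · exact search3_1
  · exact search3_2
  · exact search3_3
  · exact search3_4
  · exact search3_5
  · exact search3_6

/-- The two middle pairs have different types, or the state cannot be completed. -/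
noncomputable def leafA (M : ℕ) : Bool :=
  (fBit 3 M != fBit 4 M) || search (ordB.map (stepOf dWin 48 6)) (fun _ => false) M

theorem search6_1 : search (ordA.map (stepOf dWin 48 6)) leafA
    (Nat.lor 0 (2 ^ (8 * 21 + 1))) = true := by
  decide +kernel

theorem search6_2 : search (ordA.map (stepOf dWin 48 6)) leafA
    (Nat.lor 0 (2 ^ (8 * 21 + 2))) = true := by
  decide +kernel

theorem search6_3 : search (ordA.map (stepOf dWin 48 6)) leafA
    (Nat.lor 0 (2 ^ (8 * 21 + 3))) = true := by
  decide +kernel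

theorem search6_4 : search (ordA.map (stepOf dWin 48 6)) leafA
    (Nat.lor 0 (2 ^ (8 * 21 + 4))) = true := by
  decide +kernel

theorem search6_5 : search (ordA.map (stepOf dWin 48 6)) leafA
    (Nat.lor 0 (2 ^ (8 * 21 + 5))) = true := by
  decide +kernel

theorem search6_6 : search (ordA.map (stepOf dWin 48 6)) leafA
    (Nat.lor 0 (2 ^ (8 * 21 + 6))) = true := by
  decide +kernel

theorem search6 : search ((21 :: ordA).map (stepOf dWin 48 6)) leafA 0 = true := by
  rw [List.map_cons, search_cons]
  apply moves_of
  intro p hp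
  obtain ⟨c, hc, rfl⟩ := List.mem_map.1 hp
  have hc6 := List.mem_range.1 hc
  interval_cases c
  · exact search6_1
  · exact search6_2
  · exact search6_3
  · exact search6_4
  · exact search6_5
  · exact search6_6


theorem moves_true {M : ℕ} {k : ℕ → Bool} : ∀ {st : List (ℕ × ℕ)}, moves M k st = true →
    ∀ p ∈ st, Nat.land M p.2 = 0 → k (Nat.lor M p.1) = true
  | [], _, p, hp, _ => by simp at hp
  | q :: st, h, p, hp, h0 => by
    have h' : @Bool.rec (fun _ => Bool) (moves M k st)
        (@Bool.rec (fun _ => Bool) false (moves M k st) (k (Nat.lor M q.1)))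
        (Nat.beq (Nat.land M q.2) 0) = true := h
    have key : moves M k st = true ∧ (Nat.land M q.2 = 0 → k (Nat.lor M q.1) = true) := by
      cases hb : Nat.beq (Nat.land M q.2) 0
      · rw [hb] at h'
        refine ⟨h', fun h1 => ?_⟩
        rw [h1] at hb
        simp at hb
      · rw [hb] at h'
        cases hk : k (Nat.lor M q.1)
        · rw [hk] at h'
          exact absurd h' (by simp)
        · rw [hk] at h'
          exact ⟨h', fun _ => rfl⟩
    rcases List.mem_cons.1 hp with rfl | hp
    · exact key.2 h0
    · exact moves_true key.1 p hp h0

/-- The state `M` records exactly the colors of the vertices in `S`. -/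
def Exact (col : ℕ → ℕ) (S : List ℕ) (M : ℕ) : Prop :=
  ∀ s c, c < 8 → (M.testBit (8 * s + c) = true ↔ s ∈ S ∧ col s = c)

theorem exact_nil (col : ℕ → ℕ) : Exact col [] 0 := by
  intro s c _
  simp

theorem maskOf_testBit (D : ℕ → ℕ → ℕ) (n t c i : ℕ) (h : (maskOf D n t c).testBit i = true) :
    ∃ s, s < n ∧ s ≠ t ∧ D s t ≤ c ∧ i = 8 * s + c := by
  unfold maskOf at h
  have gen : ∀ l : List ℕ, (l.foldr (fun s acc => if s ≠ t ∧ D s t ≤ c then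
      Nat.lor acc (2 ^ (8 * s + c)) else acc) 0).testBit i = true →
      ∃ s ∈ l, s ≠ t ∧ D s t ≤ c ∧ i = 8 * s + c := by
    intro l
    induction l with
    | nil => intro h; simp at h
    | cons a l ih =>
      intro h
      rw [List.foldr_cons] at h
      split_ifs at h with hc
      · have h2 := (Nat.testBit_or _ _ i).symm.trans h
        rw [Bool.or_eq_true] at h2
        rcases h2 with h2 | h2
        · obtain ⟨s, hs, h3⟩ := ih h2
          exact ⟨s, List.mem_cons_of_mem _ hs, h3⟩
        · rw [Nat.testBit_two_pow] at h2
          exact ⟨a, List.mem_cons_self, hc.1, hc.2, (of_decide_eq_true h2).symm⟩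
      · obtain ⟨s, hs, h3⟩ := ih h
        exact ⟨s, List.mem_cons_of_mem _ hs, h3⟩
  obtain ⟨s, hs, h3⟩ := gen _ h
  exact ⟨s, List.mem_range.1 hs, h3⟩

theorem search_sound (D : ℕ → ℕ → ℕ) (n K : ℕ) (hK8 : K < 8) (col : ℕ → ℕ)
    (hv : ∀ s t, s < n → t < n → s ≠ t → col s = col t → col s < D s t)
    (hK : ∀ s, s < n → 1 ≤ col s ∧ col s ≤ K) (leaf : ℕ → Bool) :
    ∀ (T : List ℕ), (∀ t ∈ T, t < n) → ∀ (S : List ℕ) (M : ℕ), Exact col S M →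
      search (T.map (stepOf D n K)) leaf M = true →
      ∃ M', leaf M' = true ∧ Exact col (T.reverse ++ S) M' := by
  intro T
  induction T with
  | nil => intro _ S M hM h; exact ⟨M, h, hM⟩
  | cons t T ih =>
    intro hT S M hM h
    rw [List.map_cons, search_cons] at h
    have ht : t < n := hT t List.mem_cons_self
    obtain ⟨h1, h2⟩ := hK t ht
    have hmem : (2 ^ (8 * t + col t), maskOf D n t (col t)) ∈ stepOf D n K t := by
      unfold stepOf
      refine List.mem_map.2 ⟨col t - 1, List.mem_range.2 (by omega), ?_⟩
      rw [Nat.sub_add_cancel h1]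
    have h3 := moves_true h _ hmem (by
      apply Nat.eq_of_testBit_eq
      intro i
      rw [Nat.zero_testBit]
      by_contra hne
      have hne2 : (M &&& maskOf D n t (col t)).testBit i = true := by
        simpa using hne
      rw [Nat.testBit_and, Bool.and_eq_true] at hne2
      obtain ⟨s, hs, hst, hd, rfl⟩ := maskOf_testBit _ _ _ _ _ hne2.2
      have := ((hM s (col t) (by omega)).1 hne2.1).2
      have := hv s t hs ht hst this
      omega)
    have h4 := ih (fun x hx => hT x (List.mem_cons_of_mem _ hx)) (t :: S) _ ?_ h3
    · simpa using h4
    · intro s c hc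
      have : (Nat.lor M (2 ^ (8 * t + col t))).testBit (8 * s + c)
        = (M.testBit (8 * s + c) || (2 ^ (8 * t + col t)).testBit (8 * s + c)) :=
        Nat.testBit_or _ _ _
      rw [this, Bool.or_eq_true, hM s c hc, Nat.testBit_two_pow, decide_eq_true_iff,
        List.mem_cons]
      constructor
      · rintro (⟨a, b⟩ | h)
        · exact ⟨Or.inr a, b⟩
        · have : s = t ∧ col t = c := by omega
          exact ⟨Or.inl this.1, this.1 ▸ this.2⟩
      · rintro ⟨rfl | a, b⟩
        · right; rw [b]
        · exact Or.inl ⟨a, b⟩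

/-- The type of a pair of columns with colors `u0,u1` in the top row, `w0,w1` in the bottom row. -/
def fCol (u0 u1 w0 w1 : ℕ) : Bool :=
  (decide (u0 = 3) || decide (u1 = 3)) ||
    (!(decide (w0 = 3) || decide (w1 = 3)) && !(decide (u0 = 2) || decide (u1 = 2)))

theorem exact_fBit {col : ℕ → ℕ} {S : List ℕ} {M p : ℕ} (h : Exact col S M)
    (h0 : 6 * p ∈ S) (h2 : 6 * p + 2 ∈ S) (h3 : 6 * p + 3 ∈ S) (h5 : 6 * p + 5 ∈ S) :
    fBit p M = fCol (col (6 * p)) (col (6 * p + 3)) (col (6 * p + 2)) (col (6 * p + 5)) := by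
  have key : ∀ s ∈ S, ∀ c < 8, M.testBit (8 * s + c) = decide (col s = c) := by
    intro s hs c hc
    rw [Bool.eq_iff_iff, h s c hc, decide_eq_true_iff]
    simp [hs]
  unfold fBit fCol
  rw [key _ h0 3 (by norm_num), key _ h3 3 (by norm_num), key _ h2 3 (by norm_num),
    key _ h5 3 (by norm_num), key _ h0 2 (by norm_num), key _ h3 2 (by norm_num)]

theorem window6 (col : ℕ → ℕ)
    (hv : ∀ s t, s < 48 → t < 48 → s ≠ t → col s = col t → col s < dWin s t)
    (hK : ∀ s, s < 48 → 1 ≤ col s ∧ col s ≤ 6) :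
    fCol (col 18) (col 21) (col 20) (col 23) ≠ fCol (col 24) (col 27) (col 26) (col 29) := by
  obtain ⟨M, hl, hM⟩ := search_sound dWin 48 6 (by norm_num) col hv hK leafA (21 :: ordA)
    (by decide) [] 0 (exact_nil col) search6
  unfold leafA at hl
  rw [Bool.or_eq_true] at hl
  rcases hl with hl | hl
  · have e3 := exact_fBit (p := 3) hM (by decide) (by decide) (by decide) (by decide)
    have e4 := exact_fBit (p := 4) hM (by decide) (by decide) (by decide) (by decide)
    rw [e3, e4] at hl
    simpa using hl
  · obtain ⟨M', hl', -⟩ := search_sound dWin 48 6 (by norm_num) col hv hK (fun _ => false) ordB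
      (by decide) _ M hM hl
    simp at hl'

theorem window4 (col : ℕ → ℕ)
    (hv : ∀ s t, s < 12 → t < 12 → s ≠ t → col s = col t → col s < dWin s t)
    (hK : ∀ s, s < 12 → 1 ≤ col s ∧ col s ≤ 4) : False := by
  obtain ⟨M, hl, hM⟩ := search_sound dWin 12 4 (by norm_num) col hv hK _ (List.range 12)
    (by decide) [] 0 (exact_nil col) search4
  simp at hl

theorem window3 (col : ℕ → ℕ)
    (hv : ∀ s t, s < 18 → t < 18 → s ≠ t → col s = col t → col s < dCyc s t)
    (hK : ∀ s, s < 18 → 1 ≤ col s ∧ col s ≤ 6) : False := by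
  obtain ⟨M, hl, hM⟩ := search_sound dCyc 18 6 (by norm_num) col hv hK _ (0 :: ordC)
    (by decide) [] 0 (exact_nil col) search3
  simp at hl

/-- Distance in the infinite strip. -/
def fz (a b : Fin 3) (i j : ℤ) : ℕ :=
  hh a.val b.val (i - j).natAbs (decide (i / 2 = j / 2))

theorem le_fz (a b : Fin 3) (i j : ℤ) : (i - j).natAbs ≤ fz a b i j := by
  unfold fz hh
  split_ifs <;> try omega
  by_cases h : i / 2 = j / 2
  · simp only [h, decide_true, cond_true]; omega
  · simp [h]

theorem fz_comm (a b : Fin 3) (i j : ℤ) : fz a b i j = fz b a j i := by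
  unfold fz hh
  have e : (i - j).natAbs = (j - i).natAbs := by omega
  rw [e]
  by_cases hab : a.val = b.val
  · rw [hab]
    simp [eq_comm]
  · rw [if_neg hab, if_neg (Ne.symm hab)]
    simp [or_comm]

section Walks

variable {r : ℕ}

theorem adj_of_rel {x y : Fin 3 × ZMod (2 * r)} (hne : x ≠ y)
    (h : ((x.1 = 0 ∧ y.1 = 0 ∨ x.1 = 2 ∧ y.1 = 2) ∧ y.2 = x.2 + 1) ∨
    ((x.1 = 0 ∧ y.1 = 1 ∨ x.1 = 1 ∧ y.1 = 2) ∧ x.2 = y.2) ∨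
    (x.1 = 1 ∧ y.1 = 1 ∧ ∃ i : ZMod (2 * r), x.2 = 2 * i ∧ y.2 = 2 * i + 1)) :
    (HGraph r).Adj x y := by
  unfold HGraph
  rw [SimpleGraph.fromRel_adj]
  exact ⟨hne, Or.inl h⟩

theorem add_one_ne (hr : 2 ≤ r) (z : ZMod (2 * r)) : z ≠ z + 1 := by
  have : Fact (1 < 2 * r) := ⟨by omega⟩
  intro h
  exact one_ne_zero (left_eq_add.1 h)

/-- There is a walk of length at most `n`. -/
def Near (r n : ℕ) (x y : Fin 3 × ZMod (2 * r)) : Prop :=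
  ∃ p : (HGraph r).Walk x y, p.length ≤ n

theorem Near.refl (x : Fin 3 × ZMod (2 * r)) (n : ℕ) : Near r n x x :=
  ⟨SimpleGraph.Walk.nil, Nat.zero_le _⟩

theorem Near.symm {n : ℕ} {x y : Fin 3 × ZMod (2 * r)} (h : Near r n x y) : Near r n y x := by
  obtain ⟨p, hp⟩ := h
  exact ⟨p.reverse, by simpa using hp⟩

theorem Near.trans {n m k : ℕ} {x y z : Fin 3 × ZMod (2 * r)} (h : Near r n x y)
    (h' : Near r m y z) (hk : n + m ≤ k) : Near r k x z := by
  obtain ⟨p, hp⟩ := h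
  obtain ⟨q, hq⟩ := h'
  exact ⟨p.append q, by rw [SimpleGraph.Walk.length_append]; omega⟩

theorem Near.of_adj {x y : Fin 3 × ZMod (2 * r)} (h : (HGraph r).Adj x y) : Near r 1 x y :=
  ⟨h.toWalk, by simp⟩

theorem near_row_nat (hr : 2 ≤ r) (a : Fin 3) (ha : a ≠ 1) (i : ℤ) (n : ℕ) :
    Near r n (a, (i : ZMod (2 * r))) (a, ((i + n : ℤ) : ZMod (2 * r))) := by
  induction n with
  | zero => simpa using Near.refl _ _
  | succ n ih =>
    refine ih.trans (m := 1) (Near.of_adj (adj_of_rel ?_ (Or.inl ⟨?_, ?_⟩))) le_rfl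
    · intro h
      apply add_one_ne hr ((i + n : ℤ) : ZMod (2 * r))
      have := congrArg Prod.snd h
      simp only at this
      push_cast at this ⊢
      linear_combination this
    · fin_cases a <;> simp_all
    · push_cast; ring

theorem near_row (hr : 2 ≤ r) (a : Fin 3) (ha : a ≠ 1) (i j : ℤ) :
    Near r (i - j).natAbs (a, (i : ZMod (2 * r))) (a, (j : ZMod (2 * r))) := by
  rcases le_total i j with h | h
  · have := near_row_nat hr a ha i (i - j).natAbs
    rwa [show i + ((i - j).natAbs : ℤ) = j by omega] at this
  · have := near_row_nat hr a ha j (i - j).natAbs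
    rw [show j + ((i - j).natAbs : ℤ) = i by omega] at this
    exact this.symm

theorem near_col (a : Fin 3) (ha : a ≠ 1) (i : ℤ) :
    Near r 1 (a, (i : ZMod (2 * r))) (1, (i : ZMod (2 * r))) := by
  by_cases h0 : a = 0
  · subst h0
    exact Near.of_adj (adj_of_rel (by simp) (Or.inr (Or.inl ⟨by simp, rfl⟩)))
  · have h2 : a = 2 := by fin_cases a <;> simp_all
    subst h2
    refine Near.symm (Near.of_adj (adj_of_rel (by simp) (Or.inr (Or.inl ⟨by simp, rfl⟩))))

theorem near_pair (hr : 2 ≤ r) (m : ℤ) :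
    Near r 1 (1, ((2 * m : ℤ) : ZMod (2 * r))) (1, ((2 * m + 1 : ℤ) : ZMod (2 * r))) := by
  refine Near.of_adj (adj_of_rel ?_ (Or.inr (Or.inr ⟨rfl, rfl, (m : ZMod (2 * r)), ?_, ?_⟩)))
  · intro h
    apply add_one_ne hr ((2 * m : ℤ) : ZMod (2 * r))
    have := congrArg Prod.snd h
    simpa using this
  · push_cast; ring
  · push_cast; ring

theorem near_fz (hr : 2 ≤ r) (a b : Fin 3) (i j : ℤ) :
    Near r (fz a b i j) (a, (i : ZMod (2 * r))) (b, (j : ZMod (2 * r))) := by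
  by_cases ha : a = 1
  · by_cases hb : b = 1
    · subst ha hb
      by_cases hij : i = j
      · subst hij; exact Near.refl _ _
      by_cases hs : i / 2 = j / 2
      · have e : fz 1 1 i j = 1 := by
          have : (i - j).natAbs ≠ 0 := by omega
          have h2 : i - j ≠ 0 := by omega
          simp [fz, hh, hs, h2]
        rw [e]
        rcases Int.emod_two_eq_zero_or_one i with h | h
        · have := near_pair hr (i / 2)
          rwa [show 2 * (i / 2) = i by omega, show i + 1 = j by omega] at this
        · have := near_pair hr (j / 2)
          rw [show 2 * (j / 2) = j by omega, show j + 1 = i by omega] at this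
          exact this.symm
      · have e : fz 1 1 i j = (i - j).natAbs + 2 := by
          have h2 : i - j ≠ 0 := by omega
          simp [fz, hh, hs, h2]
        rw [e]
        exact ((near_col 0 (by simp) i).symm.trans (near_row hr 0 (by simp) i j) le_rfl).trans
          (near_col 0 (by simp) j) (by omega)
    · subst ha
      have e : fz 1 b i j = (i - j).natAbs + 1 := by
        have : ¬ (1 = b.val) := fun h => hb (Fin.ext h.symm)
        simp [fz, hh, this]
      rw [e]
      exact (near_col b hb i).symm.trans (near_row hr b hb i j) (by omega)
  · by_cases hb : b = 1
    · subst hb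
      have e : fz a 1 i j = (i - j).natAbs + 1 := by
        have : ¬ (a.val = 1) := fun h => ha (Fin.ext h)
        simp [fz, hh, this]
      rw [e]
      exact (near_row hr a ha i j).trans (near_col a ha j) (by omega)
    · by_cases hab : a = b
      · subst hab
        have e : fz a a i j = (i - j).natAbs := by
          have : ¬ (a.val = 1) := fun h => ha (Fin.ext h)
          simp [fz, hh, this]
        rw [e]
        exact near_row hr a ha i j
      · have e : fz a b i j = (i - j).natAbs + 2 := by
          have h1 : ¬ (a.val = 1) := fun h => ha (Fin.ext h)
          have h2 : ¬ (b.val = 1) := fun h => hb (Fin.ext h)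
          have h3 : ¬ (a.val = b.val) := fun h => hab (Fin.ext h)
          simp [fz, hh, h1, h2, h3]
        rw [e]
        exact ((near_row hr a ha i j).trans (near_col a ha j) le_rfl).trans
          (near_col b hb j).symm (by omega)

theorem dist_le_fz (hr : 2 ≤ r) (a b : Fin 3) (i j : ℤ) :
    (HGraph r).dist (a, (i : ZMod (2 * r))) (b, (j : ZMod (2 * r))) ≤ fz a b i j := by
  obtain ⟨p, hp⟩ := near_fz hr a b i j
  exact (SimpleGraph.dist_le p).trans hp

theorem even_of_cast (i : ℤ) (m : ZMod (2 * r)) (h : (i : ZMod (2 * r)) = 2 * m) : i % 2 = 0 := by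
  obtain ⟨m, rfl⟩ := ZMod.intCast_surjective m
  have h2 : ((i - 2 * m : ℤ) : ZMod (2 * r)) = 0 := by push_cast; rw [h]; ring
  rw [ZMod.intCast_zmod_eq_zero_iff_dvd] at h2
  obtain ⟨k, hk⟩ := h2
  push_cast at hk
  rw [mul_assoc] at hk
  omega

theorem adj_lift (x y : Fin 3 × ZMod (2 * r)) (h : (HGraph r).Adj x y) (i : ℤ)
    (hx : x.2 = (i : ZMod (2 * r))) :
    ∃ i' : ℤ, y.2 = (i' : ZMod (2 * r)) ∧
      ((x.1 = y.1 ∧ x.1 ≠ 1 ∧ (i' = i + 1 ∨ i' = i - 1)) ∨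
       (x.1 ≠ y.1 ∧ (x.1 = 1 ∨ y.1 = 1) ∧ i' = i) ∨
       (x.1 = 1 ∧ y.1 = 1 ∧ i / 2 = i' / 2 ∧ (i' = i + 1 ∨ i' = i - 1))) := by
  obtain ⟨a, z⟩ := x
  obtain ⟨b, w⟩ := y
  unfold HGraph at h
  rw [SimpleGraph.fromRel_adj] at h
  obtain ⟨-, h⟩ := h
  simp only at h hx ⊢
  subst hx
  rcases h with (⟨h, e⟩ | ⟨h, e⟩ | ⟨rfl, rfl, m, e1, e2⟩) |
    (⟨h, e⟩ | ⟨h, e⟩ | ⟨rfl, rfl, m, e1, e2⟩)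
  · refine ⟨i + 1, by push_cast; exact e, Or.inl ?_⟩
    rcases h with ⟨rfl, rfl⟩ | ⟨rfl, rfl⟩ <;> simp
  · refine ⟨i, e.symm, Or.inr (Or.inl ?_)⟩
    rcases h with ⟨rfl, rfl⟩ | ⟨rfl, rfl⟩ <;> simp
  · have := even_of_cast i m e1
    refine ⟨i + 1, by push_cast; rw [e2, e1], Or.inr (Or.inr ⟨rfl, rfl, by omega, by simp⟩)⟩
  · refine ⟨i - 1, by push_cast; rw [e]; ring, Or.inl ?_⟩
    rcases h with ⟨rfl, rfl⟩ | ⟨rfl, rfl⟩ <;> simp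
  · refine ⟨i, e, Or.inr (Or.inl ?_)⟩
    rcases h with ⟨rfl, rfl⟩ | ⟨rfl, rfl⟩ <;> simp
  · have := even_of_cast (i - 1) m (by push_cast; rw [e2]; ring)
    refine ⟨i - 1, by push_cast; rw [e2, e1]; ring, Or.inr (Or.inr ⟨rfl, rfl, by omega, by simp⟩)⟩

theorem fz_val (a b : Fin 3) (i j : ℤ) :
    (a = b ∧ a ≠ 1 ∧ fz a b i j = (i - j).natAbs) ∨
    (a = 1 ∧ b = 1 ∧ i = j ∧ fz a b i j = 0) ∨
    (a = 1 ∧ b = 1 ∧ i ≠ j ∧ i / 2 = j / 2 ∧ fz a b i j = 1) ∨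
    (a = 1 ∧ b = 1 ∧ i / 2 ≠ j / 2 ∧ fz a b i j = (i - j).natAbs + 2) ∨
    (a ≠ b ∧ (a = 1 ∨ b = 1) ∧ fz a b i j = (i - j).natAbs + 1) ∨
    (a ≠ b ∧ a ≠ 1 ∧ b ≠ 1 ∧ fz a b i j = (i - j).natAbs + 2) := by
  by_cases hij : i = j
  · subst hij
    fin_cases a <;> fin_cases b <;> simp [fz, hh]
  · have h2 : i - j ≠ 0 := by omega
    by_cases hs : i / 2 = j / 2
    · fin_cases a <;> fin_cases b <;> simp [fz, hh, hij, h2, hs]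
    · fin_cases a <;> fin_cases b <;> simp [fz, hh, hij, h2, hs]

theorem fz_step (a a' b : Fin 3) (i i' j : ℤ)
    (h : (a = a' ∧ a ≠ 1 ∧ (i' = i + 1 ∨ i' = i - 1)) ∨
       (a ≠ a' ∧ (a = 1 ∨ a' = 1) ∧ i' = i) ∨
       (a = 1 ∧ a' = 1 ∧ i / 2 = i' / 2 ∧ (i' = i + 1 ∨ i' = i - 1))) :
    fz a b i j ≤ fz a' b i' j + 1 := by
  have h1 := fz_val a b i j
  have h2 := fz_val a' b i' j
  generalize fz a b i j = X at *
  generalize fz a' b i' j = Y at *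
  simp only [Fin.ext_iff, ne_eq, Fin.val_one] at h h1 h2
  have := a.isLt
  have := a'.isLt
  have := b.isLt
  omega

theorem walk_lift {x y : Fin 3 × ZMod (2 * r)} (p : (HGraph r).Walk x y) :
    ∀ i : ℤ, x.2 = (i : ZMod (2 * r)) →
      ∃ j : ℤ, y.2 = (j : ZMod (2 * r)) ∧ fz x.1 y.1 i j ≤ p.length := by
  induction p with
  | nil =>
    rename_i u
    intro i hi
    refine ⟨i, hi, ?_⟩
    have : fz u.1 u.1 i i = 0 := by
      simp [fz, hh]
    omega
  | cons h p ih =>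
    intro i hi
    obtain ⟨i', hi', hst⟩ := adj_lift _ _ h i hi
    obtain ⟨j, hj, hle⟩ := ih i' hi'
    refine ⟨j, hj, ?_⟩
    rw [SimpleGraph.Walk.length_cons]
    exact (fz_step _ _ _ i i' j hst).trans (Nat.succ_le_succ hle)

theorem dist_lift (hr : 2 ≤ r) (x y : Fin 3 × ZMod (2 * r)) (i : ℤ)
    (hx : x.2 = (i : ZMod (2 * r))) :
    ∃ j : ℤ, y.2 = (j : ZMod (2 * r)) ∧ fz x.1 y.1 i j ≤ (HGraph r).dist x y := by
  obtain ⟨j0, hj0⟩ := ZMod.intCast_surjective y.2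
  have hreach : (HGraph r).Reachable x y := by
    obtain ⟨p, -⟩ := near_fz hr x.1 y.1 i j0
    rw [← hx, hj0] at p
    exact ⟨p⟩
  obtain ⟨p, hp⟩ := hreach.exists_walk_length_eq_dist
  rw [← hp]
  exact walk_lift p i hx

end Walks

theorem fz_nat (a b : Fin 3) (z : ℤ) (i d : ℕ) (hpar : z % 2 = (i : ℤ) % 2) :
    fz a b z (z + d) = hh a.val b.val d (decide (i / 2 = (i + d) / 2)) := by
  unfold fz
  have h1 : (z - (z + d)).natAbs = d := by omega
  have h2 : (z / 2 = (z + d) / 2) ↔ (i / 2 = (i + d) / 2) := by omega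
  rw [h1, decide_eq_decide.2 h2]

theorem upper {r : ℕ} (hr : 2 ≤ r) (k : ℕ) (hk7 : k ≤ 7) (W : Fin 3 → ℕ → ℕ)
    (hW : ∀ a i, 1 ≤ W a i ∧ W a i ≤ k)
    (hval : ∀ a b : Fin 3, ∀ i d : ℕ, i < 2 * r → d ≤ 7 → W a i = W b ((i + d) % (2 * r)) →
      hh a.val b.val d (decide (i / 2 = (i + d) / 2)) ≤ W a i → a = b ∧ 2 * r ∣ d) :
    ∃ c, IsPackingColoring (HGraph r) k (fun i => i) c := by
  have : NeZero (2 * r) := ⟨by omega⟩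
  refine ⟨fun x => W x.1 x.2.val, fun v => hW _ _, ?_⟩
  intro x y hne hc
  simp only at hc ⊢
  by_contra hlt
  have hx : x.2 = (((x.2.val : ℕ) : ℤ) : ZMod (2 * r)) := by simp
  have hy : y.2 = (((y.2.val : ℕ) : ℤ) : ZMod (2 * r)) := by simp
  obtain ⟨j, hj, hle⟩ := dist_lift hr x y _ hx
  have hF : fz x.1 y.1 (x.2.val : ℤ) j ≤ W x.1 x.2.val := by omega
  have hX := ZMod.val_lt x.2
  have hY := ZMod.val_lt y.2
  have hdist := le_fz x.1 y.1 (x.2.val : ℤ) j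
  have hb := (hW x.1 x.2.val).2
  have hyj : ((2 * r : ℕ) : ℤ) ∣ j - (y.2.val : ℤ) := by
    rw [← ZMod.intCast_zmod_eq_zero_iff_dvd, Int.cast_sub, ← hj, ← hy, sub_self]
  obtain ⟨q, hq⟩ := hyj
  apply hne
  rcases le_total (x.2.val : ℤ) j with hxy | hxy
  · obtain ⟨d, hd⟩ : ∃ d : ℕ, j = (x.2.val : ℤ) + d := ⟨(j - x.2.val).toNat, by omega⟩
    rw [hd] at hF
    rw [fz_nat _ _ _ x.2.val d rfl] at hF
    have hmod : (x.2.val + d) % (2 * r) = y.2.val := by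
      have : (((x.2.val + d : ℕ) : ℤ)) % ((2 * r : ℕ) : ℤ) = (y.2.val : ℤ) := by
        have e : ((x.2.val + d : ℕ) : ℤ) = (y.2.val : ℤ) + ((2 * r : ℕ) : ℤ) * q := by
          push_cast at hq ⊢; omega
        rw [e, Int.add_mul_emod_self_left]
        exact Int.emod_eq_of_lt (by omega) (by exact_mod_cast hY)
      exact_mod_cast this
    obtain ⟨h1, h2⟩ := hval x.1 y.1 x.2.val d hX (by omega) (by rw [hmod]; exact hc) hF
    refine Prod.ext h1 ?_
    rw [hj, hd]
    push_cast
    rw [(ZMod.natCast_eq_zero_iff d (2 * r)).2 h2]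
    simp
  · obtain ⟨d, hd⟩ : ∃ d : ℕ, (x.2.val : ℤ) = j + d := ⟨(x.2.val - j).toNat, by omega⟩
    rw [fz_comm, hd, fz_nat _ _ _ y.2.val d (by
      push_cast at hq
      rw [mul_assoc] at hq
      omega)] at hF
    have hmod : (y.2.val + d) % (2 * r) = x.2.val := by
      have : (((y.2.val + d : ℕ) : ℤ)) % ((2 * r : ℕ) : ℤ) = (x.2.val : ℤ) := by
        have e : ((y.2.val + d : ℕ) : ℤ) = (x.2.val : ℤ) + ((2 * r : ℕ) : ℤ) * (-q) := by
          push_cast at hq ⊢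
          linear_combination -hd - hq
        rw [e, Int.add_mul_emod_self_left]
        exact Int.emod_eq_of_lt (by omega) (by exact_mod_cast hX)
      exact_mod_cast this
    obtain ⟨h1, h2⟩ := hval y.1 x.1 y.2.val d hY (by omega) (by rw [hmod]; exact hc.symm)
      (by rw [← hc]; exact hF)
    refine Prod.ext h1.symm ?_
    rw [hj, hx, hd]
    push_cast
    rw [(ZMod.natCast_eq_zero_iff d (2 * r)).2 h2]
    simp

/-- The periodic pattern `2131 / 1514 / 3121`. -/
def pat (a i : ℕ) : ℕ :=
  ([[2, 1, 3, 1], [1, 5, 1, 4], [3, 1, 2, 1]].getD a []).getD i 1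

/-- The exceptional block `215231 / 134114 / 621721`. -/
def blk (a i : ℕ) : ℕ :=
  ([[2, 1, 5, 2, 3, 1], [1, 3, 4, 1, 1, 4], [6, 2, 1, 7, 2, 1]].getD a []).getD i 1

theorem pat_range : ∀ a : Fin 3, ∀ i : Fin 4, 1 ≤ pat a.val i.val ∧ pat a.val i.val ≤ 5 := by
  decide

theorem blk_range : ∀ a : Fin 3, ∀ i : Fin 6, 1 ≤ blk a.val i.val ∧ blk a.val i.val ≤ 7 := by
  decide

theorem pat_check : ∀ a b : Fin 3, ∀ i : Fin 4, ∀ d : Fin 8,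
    pat a.val i.val = pat b.val ((i.val + d.val) % 4) →
    hh a.val b.val d.val (decide (i.val / 2 = (i.val + d.val) / 2)) ≤ pat a.val i.val →
    a = b ∧ d.val = 0 := by
  decide +kernel

theorem pat_ok (a b : Fin 3) (i d : ℕ) (hd : d ≤ 7)
    (h1 : pat a.val (i % 4) = pat b.val ((i + d) % 4))
    (h2 : hh a.val b.val d (decide (i / 2 = (i + d) / 2)) ≤ pat a.val (i % 4)) :
    a = b ∧ d = 0 := by
  have hs : (i / 2 = (i + d) / 2) ↔ (i % 4 / 2 = (i % 4 + d) / 2) := by omega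
  have := pat_check a b ⟨i % 4, by omega⟩ ⟨d, by omega⟩
  rw [decide_eq_decide.2 hs] at h2
  refine this ?_ h2
  change pat a.val (i % 4) = pat b.val ((i % 4 + d) % 4)
  rw [h1, Nat.mod_add_mod]

theorem upper_even {r : ℕ} (hr : 2 ≤ r) (he : Even r) :
    ∃ c, IsPackingColoring (HGraph r) 5 (fun i => i) c := by
  refine upper hr 5 (by norm_num) (fun a i => pat a.val (i % 4))
    (fun a i => pat_range a ⟨i % 4, by omega⟩) ?_
  intro a b i d hi hd h1 h2
  obtain ⟨m, hm⟩ := he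
  rw [Nat.mod_mod_of_dvd _ (show 4 ∣ 2 * r from ⟨m, by omega⟩)] at h1
  obtain ⟨h3, h4⟩ := pat_ok a b i d hd h1 h2
  exact ⟨h3, h4 ▸ dvd_zero _⟩

/-- The word used for odd `r`: the block followed by copies of the pattern. -/
def wrd (a i : ℕ) : ℕ := if i < 6 then blk a i else pat a ((i - 6) % 4)

theorem wrd_range (a : Fin 3) (i : ℕ) : 1 ≤ wrd a.val i ∧ wrd a.val i ≤ 7 := by
  unfold wrd
  split_ifs with h
  · exact blk_range a ⟨i, h⟩
  · have := pat_range a ⟨(i - 6) % 4, by omega⟩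
    exact ⟨this.1, this.2.trans (by norm_num)⟩

theorem wrd_check3 : ∀ a b : Fin 3, ∀ i : Fin 6, ∀ d : Fin 8,
    wrd a.val i.val = wrd b.val ((i.val + d.val) % 6) →
    hh a.val b.val d.val (decide (i.val / 2 = (i.val + d.val) / 2)) ≤ wrd a.val i.val →
    a = b ∧ 6 ∣ d.val := by
  decide +kernel

theorem wrd_check5 : ∀ a b : Fin 3, ∀ i : Fin 10, ∀ d : Fin 8,
    wrd a.val i.val = wrd b.val ((i.val + d.val) % 10) →
    hh a.val b.val d.val (decide (i.val / 2 = (i.val + d.val) / 2)) ≤ wrd a.val i.val →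
    a = b ∧ 10 ∣ d.val := by
  decide +kernel

theorem wrd_check_start : ∀ a b : Fin 3, ∀ i : Fin 6, ∀ d : Fin 8,
    wrd a.val i.val = wrd b.val (i.val + d.val) →
    hh a.val b.val d.val (decide (i.val / 2 = (i.val + d.val) / 2)) ≤ wrd a.val i.val →
    a = b ∧ d.val = 0 := by
  decide +kernel

/-- Here column `14 - t` represents column `2r - t`. -/
theorem wrd_check_wrap : ∀ a b : Fin 3, ∀ t : Fin 8, ∀ d : Fin 8, 1 ≤ t.val → t.val ≤ d.val →
    wrd a.val (14 - t.val) = wrd b.val (d.val - t.val) →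
    hh a.val b.val d.val (decide ((14 - t.val) / 2 = (14 - t.val + d.val) / 2)) ≤
      wrd a.val (14 - t.val) → False := by
  decide +kernel

theorem upper_odd {r : ℕ} (hr : 2 ≤ r) (ho : ¬ Even r) :
    ∃ c, IsPackingColoring (HGraph r) 7 (fun i => i) c := by
  refine upper hr 7 le_rfl (fun a i => wrd a.val i) wrd_range ?_
  intro a b i d hi hd h1 h2
  rw [Nat.not_even_iff] at ho
  by_cases h3 : r = 3
  · subst h3
    exact wrd_check3 a b ⟨i, hi⟩ ⟨d, by omega⟩ h1 h2
  by_cases h5 : r = 5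
  · subst h5
    exact wrd_check5 a b ⟨i, hi⟩ ⟨d, by omega⟩ h1 h2
  have h14 : 14 ≤ 2 * r := by omega
  by_cases hw : i + d < 2 * r
  · rw [Nat.mod_eq_of_lt hw] at h1
    suffices h : a = b ∧ d = 0 from ⟨h.1, h.2 ▸ dvd_zero _⟩
    by_cases h6 : i < 6
    · exact wrd_check_start a b ⟨i, h6⟩ ⟨d, by omega⟩ h1 h2
    · have e1 : wrd a.val i = pat a.val ((i - 6) % 4) := if_neg h6
      have e2 : wrd b.val (i + d) = pat b.val ((i - 6 + d) % 4) := by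
        rw [wrd, if_neg (by omega), show i + d - 6 = i - 6 + d by omega]
      rw [e1, e2] at h1
      rw [e1] at h2
      have hs : (i / 2 = (i + d) / 2) ↔ ((i - 6) / 2 = (i - 6 + d) / 2) := by omega
      rw [decide_eq_decide.2 hs] at h2
      exact pat_ok a b (i - 6) d hd h1 h2
  · exfalso
    obtain ⟨t, ht⟩ : ∃ t, i + t = 2 * r := ⟨2 * r - i, by omega⟩
    have e0 : (i + d) % (2 * r) = d - t := by
      rw [Nat.mod_eq_sub_mod (by omega), Nat.mod_eq_of_lt (by omega)]
      omega
    have e1 : wrd a.val i = wrd a.val (14 - t) := by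
      rw [wrd, wrd, if_neg (by omega), if_neg (by omega)]
      congr 1
      omega
    have hs : (i / 2 = (i + d) / 2) ↔ ((14 - t) / 2 = (14 - t + d) / 2) := by omega
    rw [e0, e1] at h1
    rw [e1, decide_eq_decide.2 hs] at h2
    exact wrd_check_wrap a b ⟨t, by omega⟩ ⟨d, by omega⟩ (by simp only; omega)
      (by simp only; omega) h1 h2

/-- The row of window vertex `t`. -/
def rowOf (t : ℕ) : Fin 3 := ⟨t % 3, Nat.mod_lt _ (by norm_num)⟩

theorem rowOf_val (t : ℕ) : (rowOf t).val = t % 3 := rfl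

theorem dWin_eq (s t : ℕ) (p : ℤ) :
    dWin s t = fz (rowOf s) (rowOf t) (((s / 3 : ℕ) : ℤ) + 2 * p)
      (((t / 3 : ℕ) : ℤ) + 2 * p) := by
  unfold dWin fz
  have h1 : (((s / 3 : ℕ) : ℤ) + 2 * p - (((t / 3 : ℕ) : ℤ) + 2 * p)).natAbs =
    (s / 3 - t / 3) + (t / 3 - s / 3) := by omega
  have h2 : Nat.beq (s / 3 / 2) (t / 3 / 2) =
      decide ((((s / 3 : ℕ) : ℤ) + 2 * p) / 2 = (((t / 3 : ℕ) : ℤ) + 2 * p) / 2) := by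
    rw [Bool.eq_iff_iff, Nat.beq_eq, decide_eq_true_iff]
    omega
  rw [h1, h2, rowOf_val, rowOf_val]

section Lower

variable {r : ℕ}

theorem lower4 (hr : 2 ≤ r) (k : ℕ) (hk : k ≤ 4) (c : Fin 3 × ZMod (2 * r) → ℕ)
    (hc : IsPackingColoring (HGraph r) k (fun i => i) c) : False := by
  obtain ⟨hc1, hc2⟩ := hc
  refine window4 (fun t => c ((rowOf t), ((((t / 3 : ℕ) : ℤ) + 2 * 0 : ℤ) : ZMod (2 * r))))
    ?_ (fun s _ => ⟨(hc1 _).1, (hc1 _).2.trans hk⟩)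
  intro s t hs ht hst he
  rw [dWin_eq s t 0]
  refine lt_of_lt_of_le (hc2 _ _ ?_ he) (dist_le_fz hr _ _ _ _)
  intro h
  have e1 := congrArg (fun x => (x.1).val) h
  have e2 := congrArg Prod.snd h
  simp only [rowOf_val] at e1 e2
  rw [← sub_eq_zero, ← Int.cast_sub, ZMod.intCast_zmod_eq_zero_iff_dvd] at e2
  have h0 := Int.eq_zero_of_abs_lt_dvd e2 (by rw [abs_lt]; push_cast; omega)
  omega

theorem lower_three (k : ℕ) (hk : k ≤ 6) (c : Fin 3 × ZMod (2 * 3) → ℕ)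
    (hc : IsPackingColoring (HGraph 3) k (fun i => i) c) : False := by
  obtain ⟨hc1, hc2⟩ := hc
  refine window3 (fun t => c ((rowOf t), (((t / 3 : ℕ) : ℤ) : ZMod (2 * 3))))
    ?_ (fun s _ => ⟨(hc1 _).1, (hc1 _).2.trans hk⟩)
  intro s t hs ht hst he
  have hne : ((rowOf s), (((s / 3 : ℕ) : ℤ) : ZMod (2 * 3))) ≠
      ((rowOf t), (((t / 3 : ℕ) : ℤ) : ZMod (2 * 3))) := by
    intro h
    have e1 := congrArg (fun x => (x.1).val) h
    have e2 := congrArg Prod.snd h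
    simp only [rowOf_val] at e1 e2
    rw [← sub_eq_zero, ← Int.cast_sub, ZMod.intCast_zmod_eq_zero_iff_dvd] at e2
    have h0 := Int.eq_zero_of_abs_lt_dvd e2 (by rw [abs_lt]; push_cast; omega)
    omega
  refine lt_of_lt_of_le (hc2 _ _ hne he) ?_
  have key : ∃ q : ℤ, fz (rowOf s) (rowOf t) ((s / 3 : ℕ) : ℤ) (((t / 3 : ℕ) : ℤ) + 6 * q)
      ≤ dCyc s t := by
    have main : ∀ s' t' : Fin 18, ∃ q ∈ [(-1 : ℤ), 0, 1],
        fz (rowOf s'.val) (rowOf t'.val) ((s'.val / 3 : ℕ) : ℤ)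
          (((t'.val / 3 : ℕ) : ℤ) + 6 * q) ≤ dCyc s'.val t'.val := by
      decide +kernel
    obtain ⟨q, -, hq⟩ := main ⟨s, hs⟩ ⟨t, ht⟩
    exact ⟨q, hq⟩
  obtain ⟨q, hq⟩ := key
  refine le_trans ?_ hq
  have e := dist_le_fz (r := 3) (by norm_num) (rowOf s) (rowOf t) ((s / 3 : ℕ) : ℤ)
    (((t / 3 : ℕ) : ℤ) + 6 * q)
  have e6 : ((((t / 3 : ℕ) : ℤ) + 6 * q : ℤ) : ZMod (2 * 3)) =
      (((t / 3 : ℕ) : ℤ) : ZMod (2 * 3)) := by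
    rw [Int.cast_add, Int.cast_mul, show ((6 : ℤ) : ZMod (2 * 3)) = 0 by decide, zero_mul,
      add_zero]
  rw [e6] at e
  exact e

theorem lower_odd (hr : 5 ≤ r) (ho : r % 2 = 1) (k : ℕ) (hk : k ≤ 6)
    (c : Fin 3 × ZMod (2 * r) → ℕ)
    (hc : IsPackingColoring (HGraph r) k (fun i => i) c) : False := by
  obtain ⟨hc1, hc2⟩ := hc
  let C : Fin 3 → ℤ → ℕ := fun a i => c (a, (i : ZMod (2 * r)))
  have hC : ∀ a b i j, ¬ (a = b ∧ i = j) → C a i = C b j → C a i < fz a b i j := by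
    intro a b i j hne he
    by_cases heq : (a, (i : ZMod (2 * r))) = (b, (j : ZMod (2 * r)))
    · have e1 : a = b := congrArg Prod.fst heq
      have e2 : (i : ZMod (2 * r)) = (j : ZMod (2 * r)) := congrArg Prod.snd heq
      have hij : i ≠ j := fun h => hne ⟨e1, h⟩
      rw [← sub_eq_zero, ← Int.cast_sub, ZMod.intCast_zmod_eq_zero_iff_dvd] at e2
      have hlow : ((2 * r : ℕ) : ℤ) ≤ |i - j| := by
        by_contra hlt
        have := Int.eq_zero_of_abs_lt_dvd e2 (by omega)
        omega
      have h1 := le_fz a b i j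
      have h2 : C a i ≤ k := (hc1 _).2
      rw [Int.abs_eq_natAbs] at hlow
      omega
    · exact lt_of_lt_of_le (hc2 _ _ heq he) (dist_le_fz (by omega) _ _ _ _)
  let g : ℤ → Bool := fun p =>
    fCol (C 0 (2 * p)) (C 0 (2 * p + 1)) (C 2 (2 * p)) (C 2 (2 * p + 1))
  have hg : ∀ p, g p ≠ g (p + 1) := by
    intro p
    have := window6 (fun t => C (rowOf t) (((t / 3 : ℕ) : ℤ) + 2 * (p - 3))) ?_
      (fun s _ => ⟨(hc1 _).1, (hc1 _).2.trans hk⟩)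
    · norm_num at this
      have e0 : 6 + 2 * (p - 3) = 2 * p := by ring
      have e1 : 7 + 2 * (p - 3) = 2 * p + 1 := by ring
      have e2 : 8 + 2 * (p - 3) = 2 * (p + 1) := by ring
      have e3 : 9 + 2 * (p - 3) = 2 * (p + 1) + 1 := by ring
      rw [e0, e1, e2, e3] at this
      exact this
    · intro s t hs ht hst he
      rw [dWin_eq s t (p - 3)]
      refine hC _ _ _ _ ?_ he
      rintro ⟨h1, h2⟩
      have h3 := congrArg Fin.val h1
      rw [rowOf_val, rowOf_val] at h3
      omega
  have hn : ∀ n : ℕ, g n = if n % 2 = 0 then g 0 else !(g 0) := by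
    intro n
    induction n with
    | zero => simp
    | succ n ih =>
      have h1 := hg n
      rw [ih] at h1
      push_cast
      rcases Nat.mod_two_eq_zero_or_one n with h | h
      · rw [if_pos h] at h1
        rw [if_neg (by omega)]
        revert h1
        cases g 0 <;> cases g (n + 1) <;> simp
      · rw [if_neg (by omega)] at h1
        rw [if_pos (by omega)]
        revert h1
        cases g 0 <;> cases g (n + 1) <;> simp
  have hr1 := hn r
  rw [if_neg (by omega)] at hr1
  have hper : g r = g 0 := by
    have z : (2 : ZMod (2 * r)) * (r : ZMod (2 * r)) = 0 := by
      have := ZMod.natCast_self (2 * r)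
      push_cast at this
      exact this
    simp only [g, C]
    push_cast
    rw [z]
    simp
  rw [hper] at hr1
  revert hr1
  cases g 0 <;> simp

end Lower

/-- For `r ≥ 2`, `χ_ρ(H(r)) = 5` if `r` is even and `χ_ρ(H(r)) = 7` if `r` is odd. -/
theorem packing_chromatic_H_graph (r : ℕ) (hr : 2 ≤ r) :
    packingChromaticNumber (HGraph r) (fun i => i) = if Even r then 5 else 7 := by
  unfold packingChromaticNumber
  have key : ∀ n : ℕ, (∃ c, IsPackingColoring (HGraph r) n (fun i => i) c) →
      (∀ k c, k < n → ¬ IsPackingColoring (HGraph r) k (fun i => i) c) →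
      sInf {k | ∃ c : Fin 3 × ZMod (2 * r) → ℕ,
        IsPackingColoring (HGraph r) k (fun i => i) c} = n := by
    intro n h1 h2
    refine le_antisymm (Nat.sInf_le h1) ?_
    obtain ⟨c, hc⟩ := Nat.sInf_mem (s := {k | ∃ c : Fin 3 × ZMod (2 * r) → ℕ,
        IsPackingColoring (HGraph r) k (fun i => i) c}) ⟨n, h1⟩
    by_contra hlt
    exact h2 _ c (not_le.1 hlt) hc
  split_ifs with he
  · exact key 5 (upper_even hr he) (fun k c hk hc => lower4 hr k (by omega) c hc)
  · refine key 7 (upper_odd hr he) (fun k c hk hc => ?_)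
    rw [Nat.not_even_iff] at he
    by_cases h3 : r = 3
    · subst h3
      exact lower_three k (by omega) c hc
    · exact lower_odd (by omega) he k (by omega) c hc
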